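/- Let D₄, D₆, D₈, D₁₀, D₁₂, D₁₄ be Lie derivations of L of types ε^∨_{4}, ε^∨_{6}, ε^∨_{8}, ε^∨_{10}, ε^∨_{12}, ε^∨_{14} respectively (i.e., the cases n = 1, …, 6). Then the Pollack relation 2 • ⁅D₁₄, D₄⁆ − 7 • ⁅D₁₂, D₆⁆ + 11 • ⁅D₁₀, D₈⁆ = 0 holds in the Lie algebra of Lie derivations of L. -/

import Mathlib

open scoped BigOperators

noncomputable section

/-- The free Lie algebra over ℚ on two generators. -/
abbrev L2 : Type := FreeLieAlgebra ℚ (Fin 2)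

/-- The first generator 𝖺 of the free Lie algebra. -/
def ga : L2 := FreeLieAlgebra.of ℚ 0

/-- The second generator 𝖻 of the free Lie algebra. -/
def gb : L2 := FreeLieAlgebra.of ℚ 1

/-- The adjoint action `ad x : y ↦ ⁅x, y⁆` on the free Lie algebra. -/
def adL (x : L2) : Module.End ℚ L2 := LieAlgebra.ad ℚ L2 x

/-- A Lie derivation `D` of `L2` is of type `ε^∨_{2n+2}` if
`D 𝖺 = ad(𝖺)^{2n+2} 𝖻` and
`D 𝖻 = (1/2) ∑_{i+j=2n+1} (-1)^i ⁅ad(𝖺)^i 𝖻, ad(𝖺)^j 𝖻⁆`. -/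
def IsEpsDual (n : ℕ) (D : LieDerivation ℚ L2 L2) : Prop :=
  D ga = (adL ga ^ (2 * n + 2)) gb ∧
  D gb = (1 / 2 : ℚ) • ∑ i ∈ Finset.range (2 * n + 2),
    ((-1 : ℚ)) ^ i • ⁅(adL ga ^ i) gb, (adL ga ^ (2 * n + 1 - i)) gb⁆

/-- A Lie derivation `D` of `L2` is of type `ε_{2n+2}` (the conjugate of `ε^∨_{2n+2}` by
the automorphism `𝖺 ↦ 𝖻, 𝖻 ↦ -𝖺`). -/
def IsEps (n : ℕ) (D : LieDerivation ℚ L2 L2) : Prop :=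
  D ga = -((1 / 2 : ℚ) • ∑ i ∈ Finset.range (2 * n + 2),
    ((-1 : ℚ)) ^ i • ⁅(adL gb ^ i) ga, (adL gb ^ (2 * n + 1 - i)) ga⁆) ∧
  D gb = -((adL gb ^ (2 * n + 2)) ga)

/-- A Lie derivation is of type `ε₀^∨` if it sends `𝖺 ↦ 𝖻` and `𝖻 ↦ 0`. -/
def IsEpsZeroDual (D : LieDerivation ℚ L2 L2) : Prop :=
  D ga = gb ∧ D gb = 0

/-- A Lie derivation is of type `ε₀` if it sends `𝖺 ↦ 0` and `𝖻 ↦ -𝖺`. -/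
def IsEpsZero (D : LieDerivation ℚ L2 L2) : Prop :=
  D ga = 0 ∧ D gb = -ga


namespace Pollack

/-- `B i = ad(a)^i b`. -/
def B (i : ℕ) : L2 := (adL ga ^ i) gb

theorem B_succ (i : ℕ) : B (i + 1) = ⁅ga, B i⁆ := by
  simp [B, pow_succ', adL]

section lists
variable {κ : Type}

/-- Evaluation of a formal integer combination of keys. -/
def ev (φ : κ → L2) : List (ℤ × κ) → L2
  | [] => 0
  | t :: l => t.1 • φ t.2 + ev φ l

/-- Insert a term, merging equal keys. -/
def ins [DecidableEq κ] (c : ℤ) (k : κ) : List (ℤ × κ) → List (ℤ × κ)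
  | [] => [(c, k)]
  | t :: l => if t.2 = k then (c + t.1, k) :: l else t :: ins c k l

/-- Collect equal keys. -/
def collect [DecidableEq κ] : List (ℤ × κ) → List (ℤ × κ)
  | [] => []
  | t :: l => ins t.1 t.2 (collect l)

/-- Substitute each key by a formal combination. -/
def sub {κ' : Type} (f : κ → List (ℤ × κ')) : List (ℤ × κ) → List (ℤ × κ')
  | [] => []
  | t :: l => (f t.2).map (fun s => (t.1 * s.1, s.2)) ++ sub f l

theorem ev_append (φ : κ → L2) (l m : List (ℤ × κ)) : ev φ (l ++ m) = ev φ l + ev φ m := by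
  induction l with
  | nil => simp [ev]
  | cons t l ih => simp [ev, ih, add_assoc]

theorem ev_scale (φ : κ → L2) (c : ℤ) (l : List (ℤ × κ)) :
    ev φ (l.map (fun s => (c * s.1, s.2))) = c • ev φ l := by
  induction l with
  | nil => simp [ev]
  | cons t l ih => simp [ev, ih, mul_smul]

theorem ev_ins [DecidableEq κ] (φ : κ → L2) (c : ℤ) (k : κ) (l : List (ℤ × κ)) :
    ev φ (ins c k l) = c • φ k + ev φ l := by
  induction l with
  | nil => simp [ev, ins]
  | cons t l ih =>
    by_cases h : t.2 = k
    · simp [ev, ins, h, add_smul, add_assoc]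
    · simp only [ev, ins, h, if_false, ih]; abel

theorem ev_collect [DecidableEq κ] (φ : κ → L2) (l : List (ℤ × κ)) :
    ev φ (collect l) = ev φ l := by
  induction l with
  | nil => rfl
  | cons t l ih => simp [collect, ev_ins, ih, ev]

/-- Substitution is compatible with additive maps. -/
theorem ev_sub {κ' : Type} (φ : κ → L2) (ψ : κ' → L2) (f : κ → List (ℤ × κ')) (T : L2 →+ L2)
    (h : ∀ k, ev ψ (f k) = T (φ k)) (l : List (ℤ × κ)) : ev ψ (sub f l) = T (ev φ l) := by
  induction l with
  | nil => simp [sub, ev]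
  | cons t l ih => simp [sub, ev, ev_append, ev_scale, ih, h]

theorem ev_zero (φ : κ → L2) (l : List (ℤ × κ)) (h : l.all (fun t => t.1 == 0) = true) :
    ev φ l = 0 := by
  induction l with
  | nil => rfl
  | cons t l ih =>
    simp only [List.all_cons, Bool.and_eq_true, beq_iff_eq] at h
    simp [ev, h.1, ih h.2]

end lists

/-- Double brackets. -/
def φ2 (k : ℕ × ℕ) : L2 := ⁅B k.1, B k.2⁆
/-- Triple brackets. -/
def φ3 (k : ℕ × ℕ × ℕ) : L2 := ⁅B k.1, ⁅B k.2.1, B k.2.2⁆⁆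

/-- Canonical form of a double bracket. -/
def can2 (k : ℕ × ℕ) : List (ℤ × (ℕ × ℕ)) :=
  if k.1 < k.2 then [(1, k)] else if k.1 = k.2 then [] else [(-1, (k.2, k.1))]

theorem ev_can2 (k : ℕ × ℕ) : ev φ2 (can2 k) = φ2 k := by
  obtain ⟨i, j⟩ := k
  unfold can2
  split_ifs with h1 h2
  · simp [ev]
  · simp only at h2; subst h2; simp [ev, φ2]
  · simp [ev, φ2]

/-- Canonical form of a triple bracket with ordered inner bracket. -/
def canThree (i j k : ℕ) : List (ℤ × (ℕ × ℕ × ℕ)) :=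
  if i < j then [(-1, (k, i, j)), (1, (j, i, k))] else [(1, (i, j, k))]

theorem ev_canThree (i j k : ℕ) : ev φ3 (canThree i j k) = φ3 (i, j, k) := by
  unfold canThree
  split_ifs with h
  · simp only [ev, φ3, neg_smul, one_smul, add_zero]
    rw [leibniz_lie (B i) (B j) (B k), ← lie_skew (B k)]
    simp
  · simp [ev]

/-- Canonical form of a triple bracket. -/
def can3 (t : ℕ × ℕ × ℕ) : List (ℤ × (ℕ × ℕ × ℕ)) :=
  if t.2.1 < t.2.2 then canThree t.1 t.2.1 t.2.2 else if t.2.1 = t.2.2 then []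
  else (canThree t.1 t.2.2 t.2.1).map (fun s => (-1 * s.1, s.2))

theorem ev_can3 (t : ℕ × ℕ × ℕ) : ev φ3 (can3 t) = φ3 t := by
  obtain ⟨i, j, k⟩ := t
  unfold can3
  split_ifs with h1 h2
  · exact ev_canThree i j k
  · simp only at h2; subst h2; simp [ev, φ3]
  · rw [ev_scale, ev_canThree]
    simp only [φ3, neg_smul, one_smul]
    rw [← lie_skew (B j) (B k), lie_neg]

/-- Normal form of a combination of double brackets. -/
def norm2 (l : List (ℤ × (ℕ × ℕ))) := collect (sub can2 l)
/-- Normal form of a combination of triple brackets. -/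
def norm3 (l : List (ℤ × (ℕ × ℕ × ℕ))) := collect (sub can3 l)

theorem ev_norm2 (l) : ev φ2 (norm2 l) = ev φ2 l := by
  rw [norm2, ev_collect, ev_sub φ2 φ2 can2 (AddMonoidHom.id _) ev_can2]; rfl

theorem ev_norm3 (l) : ev φ3 (norm3 l) = ev φ3 l := by
  rw [norm3, ev_collect, ev_sub φ3 φ3 can3 (AddMonoidHom.id _) ev_can3]; rfl

/-- The action of `ad a` on double brackets. -/
def del (k : ℕ × ℕ) : List (ℤ × (ℕ × ℕ)) := [(1, (k.1 + 1, k.2)), (1, (k.1, k.2 + 1))]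

theorem ev_del (k : ℕ × ℕ) : ev φ2 (del k) = ⁅ga, φ2 k⁆ := by
  rw [φ2, leibniz_lie ga (B k.1) (B k.2)]
  simp only [del, ev, φ2, B_succ, one_smul, add_zero]

/-- Twice the value at `b`. -/
def base (n : ℕ) : List (ℤ × (ℕ × ℕ)) :=
  (List.range (2 * n + 2)).map (fun i => ((-1) ^ i, (i, 2 * n + 1 - i)))

/-- Twice the value at `B i`. -/
def dB (n : ℕ) : ℕ → List (ℤ × (ℕ × ℕ))
  | 0 => norm2 (base n)
  | i + 1 => norm2 ((2, (2 * n + 2, i)) :: sub del (dB n i))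

theorem ev_map_range (φ : ℕ × ℕ → L2) (c : ℕ → ℤ) (k : ℕ → ℕ × ℕ) (m : ℕ) :
    ev φ ((List.range m).map (fun i => (c i, k i))) = ∑ i ∈ Finset.range m, c i • φ (k i) := by
  induction m with
  | zero => simp [ev]
  | succ m ih =>
    rw [List.range_succ, List.map_append, ev_append, ih, Finset.sum_range_succ]
    simp [ev]

theorem D_B {n : ℕ} {D : LieDerivation ℚ L2 L2} (h : IsEpsDual n D) (i : ℕ) :
    (2 : ℤ) • D (B i) = ev φ2 (dB n i) := by
  induction i with
  | zero =>
    rw [dB, ev_norm2, base, ev_map_range]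
    have : B 0 = gb := by simp [B]
    rw [this, h.2, ← Int.cast_smul_eq_zsmul ℚ, smul_smul]
    norm_num
    refine Finset.sum_congr rfl fun i _ => ?_
    rw [← Int.cast_smul_eq_zsmul ℚ]
    simp [φ2, B]
  | succ i ih =>
    have hd : ∀ l, ev φ2 (sub del l) = ⁅ga, ev φ2 l⁆ :=
      ev_sub φ2 φ2 del (LieAlgebra.ad ℚ L2 ga).toAddMonoidHom ev_del
    rw [dB, ev_norm2, ev, hd, ← ih, B_succ, LieDerivation.apply_lie_eq_add, h.1, smul_add,
      lie_zsmul, add_comm]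
    rfl

/-- Twice a derivation on double brackets. -/
def act (n : ℕ) (k : ℕ × ℕ) : List (ℤ × (ℕ × ℕ × ℕ)) :=
  (dB n k.2).map (fun s => (s.1, (k.1, s.2))) ++ (dB n k.1).map (fun s => (-s.1, (k.2, s.2)))

theorem ev_br (i : ℕ) (l : List (ℤ × (ℕ × ℕ))) :
    ev φ3 (l.map (fun s => (s.1, (i, s.2)))) = ⁅B i, ev φ2 l⁆ := by
  induction l with
  | nil => simp [ev]
  | cons t l ih => simp [ev, ih, φ3, φ2, lie_zsmul]

theorem ev_br' (i : ℕ) (l : List (ℤ × (ℕ × ℕ))) :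
    ev φ3 (l.map (fun s => (-s.1, (i, s.2)))) = -⁅B i, ev φ2 l⁆ := by
  induction l with
  | nil => simp [ev]
  | cons t l ih => simp [ev, ih, φ3, φ2, lie_zsmul, add_comm]

theorem ev_act {n : ℕ} {D : LieDerivation ℚ L2 L2} (h : IsEpsDual n D) (k : ℕ × ℕ) :
    ev φ3 (act n k) = (2 : ℤ) • D (φ2 k) := by
  rw [act, ev_append, ev_br, ev_br', ← D_B h, ← D_B h, φ2, LieDerivation.apply_lie_eq_sub]
  rw [lie_zsmul, lie_zsmul, smul_sub, sub_eq_add_neg]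

/-- Four times the composition, at `b`. -/
def comp (n m : ℕ) : List (ℤ × (ℕ × ℕ × ℕ)) := norm3 (sub (act n) (dB m 0))

theorem ev_comp {n m : ℕ} {D D' : LieDerivation ℚ L2 L2} (h : IsEpsDual n D)
    (h' : IsEpsDual m D') : ev φ3 (comp n m) = (4 : ℤ) • D (D' gb) := by
  have hb : B 0 = gb := by simp [B]
  rw [comp, ev_norm3, ev_sub φ2 φ3 (act n) ((2 : ℤ) • D.toLinearMap.toAddMonoidHom)
    (fun k => ev_act h k), ← D_B h', hb]
  change (2 : ℤ) • D ((2 : ℤ) • D' gb) = _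
  rw [map_zsmul, smul_smul]; rfl

/-- Scale a list. -/
def sc {κ : Type} (c : ℤ) (l : List (ℤ × κ)) : List (ℤ × κ) := l.map (fun s => (c * s.1, s.2))

theorem ev_sc {κ : Type} (φ : κ → L2) (c : ℤ) (l : List (ℤ × κ)) : ev φ (sc c l) = c • ev φ l :=
  ev_scale φ c l

/-- The relation at `a`. -/
def relA : List (ℤ × (ℕ × ℕ)) := norm2 (
  sc 2 (dB 6 4) ++ (sc (-2) (dB 1 14) ++ (sc (-7) (dB 5 6) ++ (sc 7 (dB 2 12) ++
  (sc 11 (dB 4 8) ++ sc (-11) (dB 3 10))))))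

/-- The relation at `b`. -/
def relB : List (ℤ × (ℕ × ℕ × ℕ)) := collect (
  sc 2 (comp 6 1) ++ (sc (-2) (comp 1 6) ++ (sc (-7) (comp 5 2) ++ (sc 7 (comp 2 5) ++
  (sc 11 (comp 4 3) ++ sc (-11) (comp 3 4))))))

set_option maxRecDepth 100000 in
theorem relA_zero : relA.all (fun t => t.1 == 0) = true := by decide +kernel

set_option maxRecDepth 100000 in
theorem relB_zero : relB.all (fun t => t.1 == 0) = true := by decide +kernel

theorem span_top : LieSubalgebra.lieSpan ℚ L2 (Set.range (FreeLieAlgebra.of ℚ)) = ⊤ := by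
  set S := LieSubalgebra.lieSpan ℚ L2 (Set.range (FreeLieAlgebra.of ℚ)) with hS
  let f : L2 →ₗ⁅ℚ⁆ S := FreeLieAlgebra.lift ℚ
    (fun i => ⟨FreeLieAlgebra.of ℚ i, LieSubalgebra.subset_lieSpan ⟨i, rfl⟩⟩)
  have hf : S.incl.comp f = LieHom.id := by
    apply FreeLieAlgebra.hom_ext
    intro i
    simp [f, FreeLieAlgebra.lift_of_apply]
  rw [eq_top_iff]
  intro x _
  have : ((f x : S) : L2) = x := by
    have := congrArg (fun g => g x) hf
    simpa using this
  rw [← this]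
  exact (f x).2

end Pollack

open Pollack in
theorem pollack_relation_depth_two_weight_sixteen
    (D4 D6 D8 D10 D12 D14 : LieDerivation ℚ L2 L2)
    (h4 : IsEpsDual 1 D4) (h6 : IsEpsDual 2 D6)
    (h8 : IsEpsDual 3 D8) (h10 : IsEpsDual 4 D10)
    (h12 : IsEpsDual 5 D12) (h14 : IsEpsDual 6 D14) :
    2 • ⁅D14, D4⁆ - 7 • ⁅D12, D6⁆ + 11 • ⁅D10, D8⁆ = 0 := by
  set R := 2 • ⁅D14, D4⁆ - 7 • ⁅D12, D6⁆ + 11 • ⁅D10, D8⁆ with hR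
  have hRx : ∀ x, R x = (2 : ℤ) • (D14 (D4 x) - D4 (D14 x)) - (7 : ℤ) • (D12 (D6 x) - D6 (D12 x))
      + (11 : ℤ) • (D10 (D8 x) - D8 (D10 x)) := by
    intro x
    simp only [hR, LieDerivation.add_apply, LieDerivation.sub_apply, LieDerivation.smul_apply,
      LieDerivation.commutator_apply]
    module
  have ha : R ga = 0 := by
    have h := ev_zero φ2 relA relA_zero
    simp only [relA, ev_norm2, ev_append, ev_sc, ← D_B h4, ← D_B h6, ← D_B h8, ← D_B h10,
      ← D_B h12, ← D_B h14] at h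
    have h2 : (2 : ℚ) • R ga = 0 := by
      rw [hRx, h4.1, h6.1, h8.1, h10.1, h12.1, h14.1, ← h]
      simp only [B]
      module
    exact (smul_eq_zero.mp h2).resolve_left (by norm_num)
  have hb : R gb = 0 := by
    have h := ev_zero φ3 relB relB_zero
    simp only [relB, ev_collect, ev_append, ev_sc, ev_comp h4 h14, ev_comp h14 h4,
      ev_comp h6 h12, ev_comp h12 h6, ev_comp h8 h10, ev_comp h10 h8] at h
    have h2 : (4 : ℚ) • R gb = 0 := by
      rw [hRx, ← h]
      module
    exact (smul_eq_zero.mp h2).resolve_left (by norm_num)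
  refine LieDerivation.ext_of_lieSpan_eq_top (Set.range (FreeLieAlgebra.of ℚ)) span_top ?_
  rintro _ ⟨i, rfl⟩
  fin_cases i
  · exact ha
  · exact hb
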